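/- Let η_i, i ∈ (ℤ₊)², be uniformly bounded random variables on a common probability space. Assume that for some ε > 0, Var((log n₁ · log n₂)⁻¹ Σ_{k∈R_n} (k₁k₂)⁻¹ η_k) = O((log n₁ · log n₂)^{−(1+ε)}). Then (log n₁ · log n₂)⁻¹ Σ_{k∈R_n} (k₁k₂)⁻¹ (η_k − E η_k) → 0 almost surely as n → ∞. -/

import Mathlib

open MeasureTheory ProbabilityTheory Filter Set
open scoped ProbabilityTheory

noncomputable section

/-- The rectangle of indexes `R_n = {1,…,n₁} × {1,…,n₂}` in `(ℤ₊)²`. -/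
def Rn (n : ℕ × ℕ) : Finset (ℕ × ℕ) := Finset.Icc (1, 1) n

variable {Ω : Type*} [MeasureSpace Ω]

/-- Probability of an event as a real number. -/
def pr (A : Set Ω) : ℝ := (ℙ A).toReal

/-- The event `{M(I) ≤ v} = ⋂_{i ∈ I} {X_i ≤ v_i}`. -/
def noExc (X : ℕ × ℕ → Ω → ℝ) (v : ℕ × ℕ → ℝ) (I : Finset (ℕ × ℕ)) : Set Ω :=
  ⋂ i ∈ I, {ω | X i ω ≤ v i}

/-- one-dimensional harmonic sums -/
def Hs (n : ℕ) : ℝ := ∑ k ∈ Finset.Icc 1 n, (k : ℝ)⁻¹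

lemma Hs_nonneg (n : ℕ) : 0 ≤ Hs n := Finset.sum_nonneg fun _ _ => by positivity

lemma Hs_le (n : ℕ) : Hs n ≤ 1 + Real.log n := by
  have h := harmonic_le_one_add_log n
  rw [harmonic_eq_sum_Icc] at h
  push_cast at h
  exact h

lemma Hs_diff (m n : ℕ) (hm : 1 ≤ m) (hmn : m ≤ n) (hn : n ≤ 2 * m) : Hs n ≤ Hs m + 1 := by
  have hsub : Finset.Icc 1 m ⊆ Finset.Icc 1 n := Finset.Icc_subset_Icc le_rfl hmn
  have h := Finset.sum_sdiff hsub (f := fun k : ℕ => (k : ℝ)⁻¹)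
  have hm0 : (0 : ℝ) < m := by exact_mod_cast hm
  have h2 : ∑ k ∈ Finset.Icc 1 n \ Finset.Icc 1 m, (k : ℝ)⁻¹ ≤
      (Finset.Icc 1 n \ Finset.Icc 1 m).card • (m : ℝ)⁻¹ := by
    apply Finset.sum_le_card_nsmul
    intro k hk
    simp only [Finset.mem_sdiff, Finset.mem_Icc] at hk
    have : m ≤ k := by omega
    apply inv_anti₀ hm0
    exact_mod_cast this
  have h3 : (Finset.Icc 1 n \ Finset.Icc 1 m).card ≤ m := by
    rw [Finset.card_sdiff_of_subset hsub]
    simp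
    omega
  have h4 : (Finset.Icc 1 n \ Finset.Icc 1 m).card • (m : ℝ)⁻¹ ≤ 1 := by
    rw [nsmul_eq_mul, ← div_eq_mul_inv, div_le_one hm0]
    exact_mod_cast h3
  unfold Hs
  linarith

lemma Rn_sum (n : ℕ × ℕ) : ∑ k ∈ Rn n, (k.1 * k.2 : ℝ)⁻¹ = Hs n.1 * Hs n.2 := by
  have : Rn n = Finset.Icc 1 n.1 ×ˢ Finset.Icc 1 n.2 := rfl
  rw [this, Finset.sum_product, Hs, Hs, Finset.sum_mul_sum]
  simp only [mul_inv]

lemma sum_diff_bound (a : ℕ × ℕ → ℝ) (K : ℝ) (hK : 0 ≤ K) (ha : ∀ k, |a k| ≤ K) (m n : ℕ × ℕ)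
    (h1 : 1 ≤ m.1) (h2 : 1 ≤ m.2) (hmn : m ≤ n) (hn1 : n.1 ≤ 2 * m.1) (hn2 : n.2 ≤ 2 * m.2) :
    |∑ k ∈ Rn n, (k.1 * k.2 : ℝ)⁻¹ * a k| ≤ |∑ k ∈ Rn m, (k.1 * k.2 : ℝ)⁻¹ * a k| +
      K * (3 + Real.log m.1 + Real.log m.2) := by
  have hsub : Rn m ⊆ Rn n := Finset.Icc_subset_Icc le_rfl hmn
  rw [← Finset.sum_sdiff hsub]
  have hA : |∑ k ∈ Rn n \ Rn m, (k.1 * k.2 : ℝ)⁻¹ * a k| ≤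
      K * (3 + Real.log m.1 + Real.log m.2) := by
    calc _ ≤ ∑ k ∈ Rn n \ Rn m, |(k.1 * k.2 : ℝ)⁻¹ * a k| := Finset.abs_sum_le_sum_abs _ _
      _ ≤ ∑ k ∈ Rn n \ Rn m, K * (k.1 * k.2 : ℝ)⁻¹ := by
        apply Finset.sum_le_sum
        intro k _
        have h0 : (0 : ℝ) ≤ (k.1 * k.2 : ℝ)⁻¹ := by positivity
        rw [abs_mul, abs_of_nonneg h0, mul_comm]
        exact mul_le_mul_of_nonneg_right (ha k) h0
      _ = K * ∑ k ∈ Rn n \ Rn m, (k.1 * k.2 : ℝ)⁻¹ := by rw [Finset.mul_sum]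
      _ ≤ _ := by
        apply mul_le_mul_of_nonneg_left _ hK
        have e := Finset.sum_sdiff hsub (f := fun k : ℕ × ℕ => (k.1 * k.2 : ℝ)⁻¹)
        rw [Rn_sum, Rn_sum] at e
        have a1 := Hs_diff m.1 n.1 h1 hmn.1 hn1
        have a2 := Hs_diff m.2 n.2 h2 hmn.2 hn2
        have := mul_le_mul a1 a2 (Hs_nonneg _) (by linarith [Hs_nonneg m.1])
        linarith [Hs_le m.1, Hs_le m.2]
  refine (abs_add_le _ _).trans ?_
  linarith

lemma determ (a : ℕ × ℕ → ℝ) (K : ℝ) (hK : 0 ≤ K) (ha : ∀ k, |a k| ≤ K)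
    (hT : Tendsto (fun q : ℕ × ℕ => (Real.log (2 ^ (q.1 + 1) : ℕ) * Real.log (2 ^ (q.2 + 1) : ℕ))⁻¹ *
        ∑ k ∈ Rn (2 ^ (q.1 + 1), 2 ^ (q.2 + 1)), (k.1 * k.2 : ℝ)⁻¹ * a k) atTop (nhds 0)) :
    Tendsto (fun n : ℕ × ℕ => (Real.log n.1 * Real.log n.2)⁻¹ *
        ∑ k ∈ Rn n, (k.1 * k.2 : ℝ)⁻¹ * a k) atTop (nhds 0) := by
  have hlog : Tendsto (fun n : ℕ => Nat.log 2 n - 1) atTop atTop := by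
    rw [tendsto_atTop]
    intro b
    filter_upwards [eventually_ge_atTop (2 ^ (b + 1))] with n hn
    have := Nat.le_log_of_pow_le (b := 2) (by norm_num) hn
    omega
  have hfst : Tendsto (fun n : ℕ × ℕ => n.1) atTop atTop := by
    rw [← prod_atTop_atTop_eq]; exact tendsto_fst
  have hsnd : Tendsto (fun n : ℕ × ℕ => n.2) atTop atTop := by
    rw [← prod_atTop_atTop_eq]; exact tendsto_snd
  have hq : Tendsto (fun n : ℕ × ℕ => (Nat.log 2 n.1 - 1, Nat.log 2 n.2 - 1)) atTop atTop := by
    conv_rhs => rw [← prod_atTop_atTop_eq]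
    exact (hlog.comp hfst).prodMk (hlog.comp hsnd)
  have hL : Tendsto (fun i : ℕ => (Real.log (2 ^ (i + 1) : ℕ))⁻¹) atTop (nhds 0) := by
    apply tendsto_inv_atTop_zero.comp
    apply Real.tendsto_log_atTop.comp
    apply tendsto_natCast_atTop_atTop.comp
    exact (tendsto_pow_atTop_atTop_of_one_lt (by norm_num)).comp (tendsto_add_atTop_nat 1)
  have hb : Tendsto (fun q : ℕ × ℕ => K * (3 * ((Real.log (2 ^ (q.1 + 1) : ℕ))⁻¹ *
      (Real.log (2 ^ (q.2 + 1) : ℕ))⁻¹) + (Real.log (2 ^ (q.2 + 1) : ℕ))⁻¹ +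
      (Real.log (2 ^ (q.1 + 1) : ℕ))⁻¹)) atTop (nhds 0) := by
    have l1 := hL.comp hfst
    have l2 := hL.comp hsnd
    simpa [Function.comp_def] using ((((l1.mul l2).const_mul 3).add l2).add l1).const_mul K
  have hbound := (hT.abs.add hb).comp hq
  simp only [abs_zero, add_zero] at hbound
  apply squeeze_zero_norm' _ hbound
  filter_upwards [eventually_ge_atTop ((2, 2) : ℕ × ℕ)] with n hn
  obtain ⟨n1, n2⟩ := n
  have hn1 : 2 ≤ n1 := hn.1
  have hn2 : 2 ≤ n2 := hn.2
  have key : ∀ n : ℕ, 2 ≤ n → 2 ≤ 2 ^ (Nat.log 2 n - 1 + 1) ∧ 2 ^ (Nat.log 2 n - 1 + 1) ≤ n ∧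
      n ≤ 2 * 2 ^ (Nat.log 2 n - 1 + 1) := by
    intro n h
    have h1 : 1 ≤ Nat.log 2 n := Nat.le_log_of_pow_le (by norm_num) (by simpa using h)
    rw [Nat.sub_add_cancel h1]
    refine ⟨?_, Nat.pow_log_le_self 2 (by omega), ?_⟩
    · simpa using Nat.pow_le_pow_right (n := 2) (by norm_num) h1
    · have := Nat.lt_pow_succ_log_self (b := 2) (by norm_num) n
      rw [Nat.pow_succ] at this
      omega
  simp only [Function.comp_def]
  obtain ⟨a1, a2, a3⟩ := key n1 hn1
  obtain ⟨b1, b2, b3⟩ := key n2 hn2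
  generalize 2 ^ (Nat.log 2 n1 - 1 + 1) = m1 at *
  generalize 2 ^ (Nat.log 2 n2 - 1 + 1) = m2 at *
  have hS := sum_diff_bound a K hK ha (m1, m2) (n1, n2) (by simp; omega) (by simp; omega)
    ⟨a2, b2⟩ a3 b3
  simp only at hS
  have p1 : 0 < Real.log m1 := Real.log_pos (by exact_mod_cast a1)
  have p2 : 0 < Real.log m2 := Real.log_pos (by exact_mod_cast b1)
  have q1 : Real.log m1 ≤ Real.log n1 :=
    Real.log_le_log (by exact_mod_cast (by omega : 0 < m1)) (by exact_mod_cast a2)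
  have q2 : Real.log m2 ≤ Real.log n2 :=
    Real.log_le_log (by exact_mod_cast (by omega : 0 < m2)) (by exact_mod_cast b2)
  have r : (Real.log n1 * Real.log n2)⁻¹ ≤ (Real.log m1 * Real.log m2)⁻¹ :=
    inv_anti₀ (by positivity) (mul_le_mul q1 q2 p2.le (by linarith))
  have r0 : 0 ≤ (Real.log n1 * Real.log n2)⁻¹ :=
    inv_nonneg.2 (mul_nonneg (by linarith) (by linarith))
  have r1 : 0 ≤ (Real.log m1 * Real.log m2)⁻¹ := by positivity
  rw [Real.norm_eq_abs, abs_mul, abs_mul, abs_of_nonneg r0, abs_of_nonneg r1]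
  calc _ ≤ (Real.log m1 * Real.log m2)⁻¹ * _ := mul_le_mul r hS (abs_nonneg _) r1
    _ = _ := by
      rw [mul_add]
      congr 1
      field_simp

/-- **Lemma A.3.** If `η_i` are uniformly bounded random variables and the variance of
the log-average `(log n₁ log n₂)⁻¹ Σ_{k∈R_n} (k₁k₂)⁻¹ η_k` is
`O((log n₁ · log n₂)^{−(1+ε)})` for some `ε > 0`, then the log-average of the centered
variables tends to `0` almost surely. -/
theorem lemmaA3_variance_asclt
    {Ω : Type*} [MeasureSpace Ω] [IsProbabilityMeasure (ℙ : Measure Ω)]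
    (η : ℕ × ℕ → Ω → ℝ) (hmeas : ∀ i, Measurable (η i))
    (B : ℝ) (hB : ∀ i : ℕ × ℕ, ∀ᵐ ω, |η i ω| ≤ B)
    (ε : ℝ) (hε : 0 < ε)
    (hvar : ∃ C : ℝ, ∀ n : ℕ × ℕ, 2 ≤ n.1 → 2 ≤ n.2 →
      variance (fun ω => (Real.log n.1 * Real.log n.2)⁻¹ *
          ∑ k ∈ Rn n, (k.1 * k.2 : ℝ)⁻¹ * η k ω) ℙ ≤
        C * (Real.log n.1 * Real.log n.2) ^ (-(1 + ε))) :
    ∀ᵐ ω, Tendsto (fun n : ℕ × ℕ => (Real.log n.1 * Real.log n.2)⁻¹ *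
        ∑ k ∈ Rn n, (k.1 * k.2 : ℝ)⁻¹ * (η k ω - ∫ ω', η k ω' ∂ℙ))
      atTop (nhds 0) := by
  obtain ⟨C, hC⟩ := hvar
  have hB0 : 0 ≤ B := by
    obtain ⟨ω, hω⟩ := (hB (0, 0)).exists
    exact (abs_nonneg _).trans hω
  have hmem : ∀ i, MemLp (η i) 2 (ℙ : Measure Ω) := fun i =>
    MemLp.of_bound (hmeas i).aestronglyMeasurable B (by simpa using hB i)
  have hint : ∀ i, Integrable (η i) (ℙ : Measure Ω) := fun i =>
    (hmem i).integrable (by norm_num)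
  have hEb : ∀ i, |∫ ω', η i ω' ∂(ℙ : Measure Ω)| ≤ B := by
    intro i
    have := norm_integral_le_of_norm_le_const (μ := (ℙ : Measure Ω)) (f := η i) (C := B)
      (by simpa using hB i)
    simpa using this
  -- the log-averages
  let X : ℕ × ℕ → Ω → ℝ := fun n ω => (Real.log n.1 * Real.log n.2)⁻¹ *
          ∑ k ∈ Rn n, (k.1 * k.2 : ℝ)⁻¹ * η k ω
  have hXmem : ∀ n, MemLp (X n) 2 (ℙ : Measure Ω) := fun n =>
    (memLp_finsetSum _ fun k _ => (hmem k).const_mul _).const_mul _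
  have hXc : ∀ n ω, X n ω - ∫ ω', X n ω' ∂(ℙ : Measure Ω) = (Real.log n.1 * Real.log n.2)⁻¹ *
        ∑ k ∈ Rn n, (k.1 * k.2 : ℝ)⁻¹ * (η k ω - ∫ ω', η k ω' ∂(ℙ : Measure Ω)) := by
    intro n ω
    simp only [X]
    rw [integral_const_mul, integral_finsetSum _ fun k _ => (hint k).const_mul _]
    simp only [integral_const_mul, mul_sub, Finset.sum_sub_distrib]
  let p : ℕ × ℕ → ℕ × ℕ := fun q => (2 ^ (q.1 + 1), 2 ^ (q.2 + 1))
  have hsum : Summable fun q : ℕ × ℕ => variance (X (p q)) (ℙ : Measure Ω) := by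
    have h1 : Summable fun i : ℕ => (Real.log (2 ^ (i + 1) : ℕ)) ^ (-(1 + ε)) := by
      have h := (summable_nat_add_iff 1).2
        (Real.summable_nat_rpow.2 (by linarith : -(1 + ε) < -1))
      refine (h.mul_right ((Real.log 2) ^ (-(1 + ε)))).congr fun i => ?_
      rw [← Real.mul_rpow (by positivity) (Real.log_nonneg (by norm_num))]
      push_cast
      rw [Real.log_pow]
      push_cast
      rfl
    have h0 : ∀ i : ℕ, 0 ≤ Real.log (2 ^ (i + 1) : ℕ) := fun i => Real.log_natCast_nonneg _
    have h2 := (h1.mul_of_nonneg h1 (fun i => Real.rpow_nonneg (h0 i) _)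
      (fun i => Real.rpow_nonneg (h0 i) _)).mul_left C
    refine Summable.of_nonneg_of_le (fun q => variance_nonneg _ _) (fun q => ?_) h2
    have hp : ∀ i : ℕ, 2 ≤ 2 ^ (i + 1) := fun i => by
      simpa using Nat.pow_le_pow_right (n := 2) (by norm_num) (Nat.le_add_left 1 i)
    have := hC (p q) (hp _) (hp _)
    rw [← Real.mul_rpow (h0 _) (h0 _)]
    exact this
  have hlin : ∫⁻ ω, ∑' q, ‖X (p q) ω - ∫ ω', X (p q) ω' ∂(ℙ : Measure Ω)‖ₑ ^ 2 ≠ ⊤ := by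
    rw [lintegral_tsum]
    · have : ∀ q, ∫⁻ ω, ‖X (p q) ω - ∫ ω', X (p q) ω' ∂(ℙ : Measure Ω)‖ₑ ^ 2 =
          ENNReal.ofReal (variance (X (p q)) (ℙ : Measure Ω)) := by
        intro q
        rw [(hXmem (p q)).ofReal_variance_eq]
        rfl
      simp only [this]
      exact hsum.tsum_ofReal_ne_top
    · intro q
      have := (hXmem (p q)).aestronglyMeasurable.aemeasurable
      fun_prop
  have hae := ae_lt_top' (by
    have := fun q => (hXmem (p q)).aestronglyMeasurable.aemeasurable
    fun_prop) hlin
  have hBall : ∀ᵐ ω, ∀ i, |η i ω| ≤ B := ae_all_iff.2 hB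
  filter_upwards [hae, hBall] with ω hω hb
  apply determ (fun k => η k ω - ∫ ω', η k ω' ∂(ℙ : Measure Ω)) (B + B) (by linarith)
  · intro k
    exact (abs_sub _ _).trans (add_le_add (hb k) (hEb k))
  have h1 := (ENNReal.tendsto_cofinite_zero_of_tsum_ne_top hω.ne).mono_left
    (atTop_le_cofinite (α := ℕ × ℕ))
  have h2 : Tendsto (fun q : ℕ × ℕ => (X (p q) ω - ∫ ω', X (p q) ω' ∂(ℙ : Measure Ω)) ^ 2)
      atTop (nhds 0) := by
    have := (ENNReal.tendsto_toReal ENNReal.zero_ne_top).comp h1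
    simpa [Function.comp_def] using this
  have h3 : Tendsto (fun q : ℕ × ℕ => X (p q) ω - ∫ ω', X (p q) ω' ∂(ℙ : Measure Ω))
      atTop (nhds 0) := by
    have := h2.sqrt
    simp only [Real.sqrt_sq_eq_abs, Real.sqrt_zero] at this
    exact (tendsto_zero_iff_abs_tendsto_zero _).2 this
  simp only [hXc] at h3
  exact h3
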